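/- arXiv:math/0205064 — 2 statements merged into one kernel-verified Lean document; each statement's English description precedes it below -/
import Mathlib

section
/- Let Ω ⊆ ℂ be open, let f : ℂ → ℂ be analytic (complex differentiable) on Ω, and let z1, z2 ∈ Ω with z1 ≠ z2. Let z ∈ Ω and suppose there exists r > |(z−z1)(z−z2)| such that |(w−z1)(w−z2)| ≥ r for every w ∈ ℂ \ Ω. Then the two-point Taylor series of f at z1, z2 converges to f at z: the partial sums S_N(z) = Σ_{n=0}^{N−1} [a_n(z1,z2)(z−z1) + a_n(z2,z1)(z−z2)]·((z−z1)(z−z2))^n tend to f(z) as N → ∞. -/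
/-- The two-point Taylor coefficient `a_n(z1, z2)` of `f` at the points `z1, z2`:
`a_0(z1,z2) = f(z2)/(z2−z1)` and, for `n ≥ 1`,
`a_n(z1,z2) = Σ_{k=0}^{n} ((n+k−1)!/(k!(n−k)!)) ·
  ((−1)^{n+1}·n·f^{(n−k)}(z2) + (−1)^k·k·f^{(n−k)}(z1)) / (n!·(z1−z2)^{n+k+1})`. -/
noncomputable def twoPointCoeff (f : ℂ → ℂ) (z1 z2 : ℂ) (n : ℕ) : ℂ :=
  if n = 0 then f z2 / (z2 - z1)
  else ∑ k ∈ Finset.range (n + 1),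
    ((Nat.factorial (n + k - 1) : ℂ) / ((Nat.factorial k : ℂ) * (Nat.factorial (n - k) : ℂ))) *
      (((-1 : ℂ) ^ (n + 1) * (n : ℂ) * iteratedDeriv (n - k) f z2
          + (-1 : ℂ) ^ k * (k : ℂ) * iteratedDeriv (n - k) f z1)
        / ((Nat.factorial n : ℂ) * (z1 - z2) ^ (n + k + 1)))

/-!
Put `q w = (w - z1) * (w - z2)`. Up to translations `q` is the squaring map, so splitting `f` into
its even and odd parts gives `f w = (w - z1) * A (q w) + (w - z2) * B (q w)` with `A` and `B`
holomorphic on the disc of radius `r`. The two-point Taylor series is the sum of the Taylor series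
of `A` and `B` at `0`, evaluated at `q z`. That `twoPointCoeff` yields the coefficients of `A` and
`B` follows by computing the sum of the residues of `f w / ((w - z1) ^ n * (w - z2) ^ (n + 1))` at
`z1` and `z2` in two ways: from the Taylor coefficients of `f` there, and from the decomposition,
by cancelling one power of `q` at a time.
-/

open PowerSeries
open scoped Nat Topology ContDiff

section FormalTaylorSeries

variable {𝕜 : Type*} [NontriviallyNormedField 𝕜] {f g : 𝕜 → 𝕜} {x : 𝕜}

/-- The formal Taylor series `∑ f⁽ⁿ⁾(x) / n! * X ^ n` of `f` at `x`, where `X` stands for the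
increment `w - x`. -/
noncomputable def formalTaylorSeries (f : 𝕜 → 𝕜) (x : 𝕜) : 𝕜⟦X⟧ :=
  .mk fun n => iteratedDeriv n f x / n !

@[simp]
lemma coeff_formalTaylorSeries (f : 𝕜 → 𝕜) (x : 𝕜) (n : ℕ) :
    coeff n (formalTaylorSeries f x) = iteratedDeriv n f x / n ! :=
  coeff_mk _ _

lemma formalTaylorSeries_const (c x : 𝕜) : formalTaylorSeries (fun _ => c) x = C c := by
  ext n
  rcases eq_or_ne n 0 with rfl | hn <;> simp [coeff_C, iteratedDeriv_const, *]

lemma formalTaylorSeries_sub_const (c x : 𝕜) :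
    formalTaylorSeries (fun w => w - c) x = X + C (x - c) := by
  ext n
  match n with
  | 0 => simp
  | 1 => simp
  | n + 2 =>
    have h : deriv (fun w : 𝕜 => w - c) = fun _ => 1 := by ext; simp
    simp [iteratedDeriv_succ', h, coeff_X, iteratedDeriv_const]

lemma formalTaylorSeries_const_mul (c : 𝕜) (f : 𝕜 → 𝕜) (x : 𝕜) :
    formalTaylorSeries (fun w => c * f w) x = C c * formalTaylorSeries f x := by
  ext n
  simp [mul_div_assoc]

lemma formalTaylorSeries_add (hf : ContDiffAt 𝕜 ∞ f x) (hg : ContDiffAt 𝕜 ∞ g x) :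
    formalTaylorSeries (fun w => f w + g w) x =
      formalTaylorSeries f x + formalTaylorSeries g x := by
  ext n
  have hn : (n : WithTop ℕ∞) ≤ ∞ := by exact_mod_cast le_top
  simp [iteratedDeriv_fun_add (hf.of_le hn) (hg.of_le hn), add_div]

lemma formalTaylorSeries_mul [CharZero 𝕜] (hf : ContDiffAt 𝕜 ∞ f x) (hg : ContDiffAt 𝕜 ∞ g x) :
    formalTaylorSeries (fun w => f w * g w) x =
      formalTaylorSeries f x * formalTaylorSeries g x := by
  ext n
  have hn : (n : WithTop ℕ∞) ≤ ∞ := by exact_mod_cast le_top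
  rw [coeff_formalTaylorSeries, iteratedDeriv_fun_mul (hf.of_le hn) (hg.of_le hn), coeff_mul,
    Finset.Nat.sum_antidiagonal_eq_sum_range_succ_mk, Finset.sum_div]
  refine Finset.sum_congr rfl fun i hi => ?_
  have hn0 : (n ! : 𝕜) ≠ 0 := by exact_mod_cast n.factorial_ne_zero
  rw [Nat.cast_choose 𝕜 (Finset.mem_range_succ_iff.1 hi)]
  simp only [coeff_formalTaylorSeries]
  field_simp

end FormalTaylorSeries

lemma coeff_inv_X_add_C_pow {K : Type*} [Field K] {x : K} (hx : x ≠ 0) (q k : ℕ) :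
    coeff k ((X + C x : K⟦X⟧)⁻¹ ^ q) = (-1) ^ k * ((q + k - 1).choose k : K) / x ^ (q + k) := by
  have hunit : constantCoeff (X + C x : K⟦X⟧) ≠ 0 := by simpa
  induction q generalizing k with
  | zero => cases k <;> simp [coeff_one]
  | succ q ihq =>
    have hrec : (X + C x) * (X + C x : K⟦X⟧)⁻¹ ^ (q + 1) = (X + C x)⁻¹ ^ q := by
      rw [pow_succ', ← mul_assoc, PowerSeries.mul_inv_cancel _ hunit, one_mul]
    induction k with
    | zero => simp
    | succ k ihk =>
      have hcoeff := congrArg (coeff (k + 1)) hrec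
      rw [add_mul, map_add, coeff_succ_X_mul, coeff_C_mul, ihk, ihq] at hcoeff
      rw [show q + 1 + k - 1 = q + k by omega, show q + (k + 1) - 1 = q + k by omega] at hcoeff
      rw [show q + 1 + (k + 1) - 1 = q + k + 1 by omega, Nat.choose_succ_succ]
      refine mul_left_cancel₀ hx ((eq_sub_of_add_eq' hcoeff).trans ?_)
      push_cast
      field_simp
      ring

section Residue

variable {𝕜 : Type*} [NontriviallyNormedField 𝕜] {f g : 𝕜 → 𝕜} {a b : 𝕜}

/-- The residue at `a` of `f w / ((w - a) ^ p * (w - b) ^ q)`, read off from Taylor coefficients at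
`a`. It is the coefficient of `X ^ (p - 1)` in the expansion of `f w / (w - b) ^ q` in powers of
`X = w - a`; the additional factor `X` makes it vanish for `p = 0`. -/
noncomputable def residue (f : 𝕜 → 𝕜) (a b : 𝕜) (p q : ℕ) : 𝕜 :=
  coeff p (X * (formalTaylorSeries f a * (X + C (a - b))⁻¹ ^ q))

/-- The sum of the residues of `f w / ((w - a) ^ p * (w - b) ^ q)` at `a` and `b`, the algebraic
counterpart of a contour integral around both points. -/
noncomputable def residueSum (f : 𝕜 → 𝕜) (a b : 𝕜) (p q : ℕ) : 𝕜 :=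
  residue f a b p q + residue f b a q p

@[simp]
lemma residue_zero (f : 𝕜 → 𝕜) (a b : 𝕜) (q : ℕ) : residue f a b 0 q = 0 := by
  simp [residue]

lemma residue_succ (f : 𝕜 → 𝕜) (hab : a ≠ b) (p q : ℕ) :
    residue f a b (p + 1) q = ∑ k ∈ Finset.range (p + 1),
      (-1) ^ k * ((q + k - 1).choose k : 𝕜) / (a - b) ^ (q + k) *
        (iteratedDeriv (p - k) f a / (p - k)!) := by
  rw [residue, coeff_succ_X_mul]
  simp only [mul_comm (formalTaylorSeries f a), coeff_mul,
    Finset.Nat.sum_antidiagonal_eq_sum_range_succ_mk, coeff_formalTaylorSeries,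
    coeff_inv_X_add_C_pow (sub_ne_zero.2 hab)]

lemma residue_add (p q : ℕ) (hf : ContDiffAt 𝕜 ∞ f a) (hg : ContDiffAt 𝕜 ∞ g a) :
    residue (fun w => f w + g w) a b p q = residue f a b p q + residue g a b p q := by
  simp only [residue, formalTaylorSeries_add hf hg, add_mul, mul_add, map_add]

lemma residue_const_mul (c : 𝕜) (f : 𝕜 → 𝕜) (a b : 𝕜) (p q : ℕ) :
    residue (fun w => c * f w) a b p q = c * residue f a b p q := by
  simp only [residue, formalTaylorSeries_const_mul, mul_assoc, mul_left_comm X, coeff_C_mul]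

lemma residue_sub_left_mul [CharZero 𝕜] (b : 𝕜) (p q : ℕ) (hf : ContDiffAt 𝕜 ∞ f a) :
    residue (fun w => (w - a) * f w) a b (p + 1) q = residue f a b p q := by
  have ha : ContDiffAt 𝕜 ∞ (fun w : 𝕜 => w - a) a := by fun_prop
  simp only [residue, formalTaylorSeries_mul ha hf, formalTaylorSeries_sub_const, sub_self,
    map_zero, add_zero, mul_assoc, coeff_succ_X_mul]

lemma residue_sub_right_mul [CharZero 𝕜] (hab : a ≠ b) (p q : ℕ) (hf : ContDiffAt 𝕜 ∞ f a) :
    residue (fun w => (w - b) * f w) a b p (q + 1) = residue f a b p q := by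
  have hb : ContDiffAt 𝕜 ∞ (fun w : 𝕜 => w - b) a := by fun_prop
  have hunit : constantCoeff (X + C (a - b) : 𝕜⟦X⟧) ≠ 0 := by simpa using sub_ne_zero.2 hab
  rw [residue, residue, formalTaylorSeries_mul hb hf, formalTaylorSeries_sub_const, pow_succ',
    mul_mul_mul_comm, PowerSeries.mul_inv_cancel _ hunit, one_mul]

lemma residueSum_comm (f : 𝕜 → 𝕜) (a b : 𝕜) (p q : ℕ) :
    residueSum f a b p q = residueSum f b a q p :=
  add_comm _ _

lemma residueSum_zero_one (f : 𝕜 → 𝕜) (a b : 𝕜) : residueSum f a b 0 1 = f b := by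
  simp [residueSum, residue, coeff_succ_X_mul 0]

lemma residueSum_add (p q : ℕ) (hfa : ContDiffAt 𝕜 ∞ f a) (hfb : ContDiffAt 𝕜 ∞ f b)
    (hga : ContDiffAt 𝕜 ∞ g a) (hgb : ContDiffAt 𝕜 ∞ g b) :
    residueSum (fun w => f w + g w) a b p q = residueSum f a b p q + residueSum g a b p q := by
  simp only [residueSum, residue_add _ _ hfa hga, residue_add _ _ hfb hgb, add_add_add_comm]

lemma residueSum_const_mul (c : 𝕜) (f : 𝕜 → 𝕜) (a b : 𝕜) (p q : ℕ) :
    residueSum (fun w => c * f w) a b p q = c * residueSum f a b p q := by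
  simp only [residueSum, residue_const_mul, mul_add]

variable [CharZero 𝕜]

lemma residueSum_sub_left_mul (hab : a ≠ b) (p q : ℕ) (hfa : ContDiffAt 𝕜 ∞ f a)
    (hfb : ContDiffAt 𝕜 ∞ f b) :
    residueSum (fun w => (w - a) * f w) a b (p + 1) q = residueSum f a b p q := by
  rw [residueSum, residueSum, residue_sub_left_mul b p q hfa,
    residue_sub_right_mul hab.symm q p hfb]

lemma residueSum_sub_right_mul (hab : a ≠ b) (p q : ℕ) (hfa : ContDiffAt 𝕜 ∞ f a)
    (hfb : ContDiffAt 𝕜 ∞ f b) :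
    residueSum (fun w => (w - b) * f w) a b p (q + 1) = residueSum f a b p q := by
  rw [residueSum_comm, residueSum_sub_left_mul hab.symm q p hfb hfa, residueSum_comm]

lemma residueSum_one (hab : a ≠ b) (p q : ℕ) :
    residueSum (fun _ => 1) a b p q = if p + q = 1 then 1 else 0 := by
  induction p generalizing q with
  | zero => simp [residueSum, residue, formalTaylorSeries_const, coeff_X]
  | succ p ihp =>
    induction q with
    | zero => simp [residueSum, residue, formalTaylorSeries_const, coeff_X]
    | succ q ihq =>
      have hleft : residueSum (fun w => (w - a) * 1) a b (p + 1) (q + 1) = _ :=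
        residueSum_sub_left_mul hab p (q + 1) contDiffAt_const contDiffAt_const
      have hright : residueSum (fun w => (w - b) * 1) a b (p + 1) (q + 1) = _ :=
        residueSum_sub_right_mul hab (p + 1) q contDiffAt_const contDiffAt_const
      have hsplit : (fun w => (w - a) * 1) = fun w => (w - b) * 1 + (b - a) * 1 := by
        ext w; ring
      rw [hsplit, residueSum_add _ _ (by fun_prop) (by fun_prop) (by fun_prop) (by fun_prop),
        residueSum_const_mul, hright, ihq, ihp, show p + (q + 1) = p + 1 + q by ring,
        add_eq_left] at hleft
      rw [(mul_eq_zero.1 hleft).resolve_left (sub_ne_zero.2 hab.symm), if_neg (by omega)]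

lemma residueSum_affine_eq_zero (hab : a ≠ b) (c d : 𝕜) (n : ℕ) :
    residueSum (fun w => c * (w - a) + d * (w - b)) a b (n + 1) (n + 2) = 0 := by
  have hleft : residueSum (fun w => (w - a) * 1) a b (n + 1) (n + 2) = _ :=
    residueSum_sub_left_mul hab n (n + 2) contDiffAt_const contDiffAt_const
  have hright : residueSum (fun w => (w - b) * 1) a b (n + 1) (n + 2) = _ :=
    residueSum_sub_right_mul hab (n + 1) (n + 1) contDiffAt_const contDiffAt_const
  rw [residueSum_one hab, if_neg (by omega)] at hleft hright
  simp only [mul_one] at hleft hright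
  rw [residueSum_add _ _ (by fun_prop) (by fun_prop) (by fun_prop) (by fun_prop),
    residueSum_const_mul, residueSum_const_mul, hleft, hright, mul_zero, mul_zero, add_zero]

/-- Each induction step splits off the constant terms of `A` and `B`, whose residues add up to `0`,
and cancels the factor `(w - a) * (w - b)` of the rest against the denominator. -/
theorem residueSum_eq_sub_mul_coeff [CompleteSpace 𝕜] (hab : a ≠ b) (n : ℕ) {A B : 𝕜 → 𝕜}
    {α β : FormalMultilinearSeries 𝕜 𝕜 𝕜} (hA : HasFPowerSeriesAt A α 0)
    (hB : HasFPowerSeriesAt B β 0) :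
    residueSum (fun w => (w - a) * A ((w - a) * (w - b)) + (w - b) * B ((w - a) * (w - b)))
      a b n (n + 1) = (b - a) * α.coeff n := by
  induction n generalizing A B α β with
  | zero =>
    have hα : α.coeff 0 = A 0 := hA.coeff_zero 1
    simp [residueSum_zero_one, hα]
  | succ n ih =>
    set A' := dslope A 0
    set B' := dslope B 0
    have hA' : HasFPowerSeriesAt A' α.fslope 0 := hA.has_fpower_series_dslope_fslope
    have hB' : HasFPowerSeriesAt B' β.fslope 0 := hB.has_fpower_series_dslope_fslope
    set h : 𝕜 → 𝕜 := fun w => (w - a) * A' ((w - a) * (w - b)) + (w - b) * B' ((w - a) * (w - b))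
    have hsmooth : ∀ x, (x - a) * (x - b) = 0 → ContDiffAt 𝕜 ∞ h x := by
      intro x hx
      have hq : AnalyticAt 𝕜 (fun w => (w - a) * (w - b)) x := by fun_prop
      have hA'q := AnalyticAt.fun_comp (hx ▸ hA'.analyticAt) hq
      have hB'q := AnalyticAt.fun_comp (hx ▸ hB'.analyticAt) hq
      have ha : AnalyticAt 𝕜 (fun w => w - a) x := by fun_prop
      have hb : AnalyticAt 𝕜 (fun w => w - b) x := by fun_prop
      exact ((ha.mul hA'q).add (hb.mul hB'q)).contDiffAt
    have ha : ContDiffAt 𝕜 ∞ h a := hsmooth a (by simp)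
    have hb : ContDiffAt 𝕜 ∞ h b := hsmooth b (by simp)
    have hdslope (F : 𝕜 → 𝕜) (u : 𝕜) : F u = F 0 + u * dslope F 0 u := by
      have := sub_smul_dslope F 0 u
      rw [sub_zero, smul_eq_mul] at this
      rw [this, add_sub_cancel]
    have hsplit :
        (fun w => (w - a) * A ((w - a) * (w - b)) + (w - b) * B ((w - a) * (w - b))) =
          fun w => (A 0 * (w - a) + B 0 * (w - b)) + (w - a) * ((w - b) * h w) := by
      ext w
      rw [hdslope A, hdslope B]
      ring
    rw [hsplit, residueSum_add _ _ (by fun_prop) (by fun_prop) (by fun_prop) (by fun_prop),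
      residueSum_affine_eq_zero hab, zero_add,
      residueSum_sub_left_mul hab _ _ (by fun_prop) (by fun_prop),
      residueSum_sub_right_mul hab _ _ ha hb, ih hA' hB', FormalMultilinearSeries.coeff_fslope]

end Residue

section Decomposition

variable {E : Type*} [NormedAddCommGroup E] [NormedSpace ℂ E] [CompleteSpace E]

/-- Near `v ≠ 0` the function `H` is `G` composed with a holomorphic branch of the square root;
continuity removes the singularity at `0`. -/
lemma exists_differentiableOn_comp_sq_of_even {V : Set ℂ} (hV : IsOpen V) {G : ℂ → E}
    (hG : G.Even) (hd : DifferentiableOn ℂ G ((· ^ 2) ⁻¹' V)) :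
    ∃ H : ℂ → E, DifferentiableOn ℂ H V ∧ ∀ s, G s = H (s ^ 2) := by
  have hsq (v : ℂ) : (v ^ (1 / 2 : ℂ)) ^ 2 = v := by simp
  have hG_sq {s t : ℂ} (hst : s ^ 2 = t ^ 2) : G s = G t := by
    rcases sq_eq_sq_iff_eq_or_eq_neg.1 hst with rfl | rfl
    exacts [rfl, hG t]
  have hG_at {s : ℂ} (hs : s ^ 2 ∈ V) : DifferentiableAt ℂ G s :=
    hd.differentiableAt ((hV.preimage (continuous_pow 2)).mem_nhds hs)
  set H : ℂ → E := fun v => G (v ^ (1 / 2 : ℂ))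
  have hH_ne {v : ℂ} (hv : v ∈ V) (hv0 : v ≠ 0) : DifferentiableAt ℂ H v := by
    set σ : ℂ → ℂ := fun u => v ^ (1 / 2 : ℂ) * (u / v) ^ (1 / 2 : ℂ)
    have hσ (u : ℂ) : σ u ^ 2 = u := by rw [mul_pow, hsq, hsq, mul_div_cancel₀ u hv0]
    have hHσ : H = G ∘ σ := funext fun u => hG_sq ((hsq u).trans (hσ u).symm)
    have hslit : v / v ∈ Complex.slitPlane := by simp [div_self hv0]
    have hσ_diff : DifferentiableAt ℂ σ v :=
      ((differentiableAt_id.div_const v).cpow_const hslit).const_mul _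
    rw [hHσ]
    exact (hG_at (by rwa [hσ])).comp v hσ_diff
  refine ⟨H, ?_, fun s => hG_sq (hsq _).symm⟩
  by_cases h0 : (0 : ℂ) ∈ V
  · refine (Complex.differentiableOn_compl_singleton_and_continuousAt_iff (hV.mem_nhds h0)).1
      ⟨fun v hv => (hH_ne hv.1 hv.2).differentiableWithinAt, ?_⟩
    have hsqrt : ContinuousAt (fun v : ℂ => v ^ (1 / 2 : ℂ)) 0 :=
      Complex.continuousAt_cpow_const_of_re_pos (by simp) (by norm_num)
    exact ContinuousAt.comp (hG_at (by rwa [hsq])).continuousAt hsqrt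
  · exact fun v hv => (hH_ne hv (ne_of_mem_of_not_mem hv h0)).differentiableWithinAt

lemma exists_differentiableOn_comp_sq_add_smul_comp_sq {V : Set ℂ} (hV : IsOpen V) {F : ℂ → E}
    (hF : DifferentiableOn ℂ F ((· ^ 2) ⁻¹' V)) :
    ∃ H₀ H₁ : ℂ → E, DifferentiableOn ℂ H₀ V ∧ DifferentiableOn ℂ H₁ V ∧
      ∀ s, F s = H₀ (s ^ 2) + s • H₁ (s ^ 2) := by
  have hU : IsOpen ((· ^ 2) ⁻¹' V : Set ℂ) := hV.preimage (continuous_pow 2)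
  have hF_neg : DifferentiableOn ℂ (fun s => F (-s)) ((· ^ 2) ⁻¹' V) :=
    hF.comp (by fun_prop) fun s hs => by simpa using hs
  set D : ℂ → E := fun s => (1 / 2 : ℂ) • (F s - F (-s))
  have hD : DifferentiableOn ℂ D ((· ^ 2) ⁻¹' V) := (hF.sub hF_neg).const_smul _
  have hD_zero : D 0 = 0 := by simp [D]
  have hD_neg (s : ℂ) : D (-s) = -D s := by simp [D, ← smul_neg]
  have hslope : DifferentiableOn ℂ (dslope D 0) ((· ^ 2) ⁻¹' V) := by
    by_cases h0 : (0 : ℂ) ∈ ((· ^ 2) ⁻¹' V : Set ℂ)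
    · exact (Complex.differentiableOn_dslope (hU.mem_nhds h0)).2 hD
    · exact (differentiableOn_dslope_of_notMem h0).2 hD
  have hslope_even : (dslope D 0).Even := fun s => by
    rcases eq_or_ne s 0 with rfl | hs
    · simp
    · simp [dslope_of_ne _ hs, dslope_of_ne _ (neg_ne_zero.2 hs), slope_def_module, hD_zero,
        hD_neg, inv_neg]
  obtain ⟨H₀, hH₀, hF_even⟩ := exists_differentiableOn_comp_sq_of_even hV
    (G := fun s => (1 / 2 : ℂ) • (F s + F (-s))) (fun s => by simp [add_comm])
    ((hF.add hF_neg).const_smul _)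
  obtain ⟨H₁, hH₁, hF_odd⟩ := exists_differentiableOn_comp_sq_of_even hV hslope_even hslope
  refine ⟨H₀, H₁, hH₀, hH₁, fun s => ?_⟩
  have hD_eq : s • dslope D 0 s = D s := by simpa [hD_zero] using sub_smul_dslope D 0 s
  rw [← hF_even, ← hF_odd, hD_eq]
  module

theorem exists_differentiableOn_sub_smul_add_sub_smul {a b : ℂ} (hab : a ≠ b) {V : Set ℂ}
    (hV : IsOpen V) {f : ℂ → E}
    (hf : DifferentiableOn ℂ f ((fun w => (w - a) * (w - b)) ⁻¹' V)) :
    ∃ A B : ℂ → E, DifferentiableOn ℂ A V ∧ DifferentiableOn ℂ B V ∧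
      ∀ w, f w = (w - a) • A ((w - a) * (w - b)) + (w - b) • B ((w - a) * (w - b)) := by
  set m : ℂ := (a + b) / 2
  set e : ℂ := ((a - b) / 2) ^ 2
  have hsquare (w : ℂ) : (w - m) ^ 2 = (w - a) * (w - b) + e := by ring
  have hV' : IsOpen ((· - e) ⁻¹' V) := hV.preimage (by fun_prop)
  have hF : DifferentiableOn ℂ (fun s => f (s + m)) ((· ^ 2) ⁻¹' ((· - e) ⁻¹' V)) := by
    refine hf.comp (by fun_prop) fun s hs => ?_
    have := hsquare (s + m)
    rw [add_sub_cancel_right] at this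
    simpa [this] using hs
  obtain ⟨H₀, H₁, hH₀, hH₁, hF_eq⟩ := exists_differentiableOn_comp_sq_add_smul_comp_sq hV' hF
  have hshift : Set.MapsTo (· + e) V ((· - e) ⁻¹' V) := fun u hu => by simpa using hu
  have hK₀ : DifferentiableOn ℂ (fun u => H₀ (u + e)) V := hH₀.comp (by fun_prop) hshift
  have hK₁ : DifferentiableOn ℂ (fun u => H₁ (u + e)) V := hH₁.comp (by fun_prop) hshift
  refine ⟨fun u => (b - a)⁻¹ • H₀ (u + e) + (1 / 2 : ℂ) • H₁ (u + e),
    fun u => -(b - a)⁻¹ • H₀ (u + e) + (1 / 2 : ℂ) • H₁ (u + e),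
    (hK₀.const_smul _).add (hK₁.const_smul _), (hK₀.const_smul _).add (hK₁.const_smul _),
    fun w => ?_⟩
  have hone : (w - a) * (b - a)⁻¹ - (w - b) * (b - a)⁻¹ = 1 := by
    field_simp [sub_ne_zero.2 hab.symm]
    ring
  calc f w = H₀ ((w - m) ^ 2) + (w - m) • H₁ ((w - m) ^ 2) := by simpa using hF_eq (w - m)
    _ = ((w - a) * (b - a)⁻¹ - (w - b) * (b - a)⁻¹) • H₀ ((w - m) ^ 2) +
        (w - m) • H₁ ((w - m) ^ 2) := by rw [hone, one_smul]
    _ = _ := by rw [hsquare]; module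

end Decomposition

section TwoPointTaylor

variable {f : ℂ → ℂ} {a b : ℂ}

lemma residue_add_one_self (f : ℂ → ℂ) (hab : a ≠ b) {n : ℕ} (hn : n ≠ 0) :
    residue f b a (n + 1) n = (∑ k ∈ Finset.range (n + 1),
      ((n + k - 1)! : ℂ) / ((k ! : ℂ) * ((n - k)! : ℂ)) *
        ((-1) ^ (n + 1) * n * iteratedDeriv (n - k) f b /
          ((n ! : ℂ) * (a - b) ^ (n + k + 1)))) * (b - a) := by
  obtain ⟨m, rfl⟩ := Nat.exists_eq_succ_of_ne_zero hn
  rw [residue_succ f hab.symm, Finset.sum_mul]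
  refine Finset.sum_congr rfl fun k _ => ?_
  have hchoose : ((m + k).choose k : ℂ) = (m + k)! / (k ! * m !) := by
    rw [Nat.cast_choose ℂ (Nat.le_add_left k m), Nat.add_sub_cancel]
  have hfact (i : ℕ) : (i ! : ℂ) ≠ 0 := by exact_mod_cast i.factorial_ne_zero
  have hm : (m : ℂ) + 1 ≠ 0 := by exact_mod_cast m.succ_ne_zero
  rw [show m.succ + k - 1 = m + k by omega, hchoose, ← neg_sub a b, neg_pow (a - b)]
  simp only [Nat.succ_eq_add_one, Nat.factorial_succ]
  push_cast
  field_simp [hfact]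
  ring_nf
  simp

lemma residue_self_add_one (f : ℂ → ℂ) (hab : a ≠ b) (n : ℕ) :
    residue f a b n (n + 1) = (∑ k ∈ Finset.range (n + 1),
      ((n + k - 1)! : ℂ) / ((k ! : ℂ) * ((n - k)! : ℂ)) *
        ((-1) ^ k * k * iteratedDeriv (n - k) f a /
          ((n ! : ℂ) * (a - b) ^ (n + k + 1)))) * (b - a) := by
  obtain _ | n := n
  · simp
  rw [residue_succ f hab, Finset.sum_range_succ' _ (n + 1), Nat.cast_zero]
  simp only [mul_zero, zero_mul, zero_div, add_zero, Finset.sum_mul]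
  refine Finset.sum_congr rfl fun k _ => ?_
  have hchoose : ((n + 1 + k).choose k : ℂ) = (n + 1 + k)! / (k ! * (n + 1)!) := by
    rw [Nat.cast_choose ℂ (Nat.le_add_left k _), Nat.add_sub_cancel]
  have hfact (i : ℕ) : (i ! : ℂ) ≠ 0 := by exact_mod_cast i.factorial_ne_zero
  have hk : (k : ℂ) + 1 ≠ 0 := by exact_mod_cast k.succ_ne_zero
  rw [show n + 1 + 1 + k - 1 = n + 1 + k by omega, hchoose,
    show n + 1 + (k + 1) - 1 = n + 1 + k by omega, Nat.add_sub_add_right, Nat.factorial_succ k]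
  push_cast
  field_simp [hfact]
  ring

lemma twoPointCoeff_mul_sub (f : ℂ → ℂ) (hab : a ≠ b) (n : ℕ) :
    twoPointCoeff f a b n * (b - a) = residueSum f a b n (n + 1) := by
  rcases eq_or_ne n 0 with rfl | hn
  · rw [residueSum_zero_one, twoPointCoeff, if_pos rfl, div_mul_cancel₀ _ (sub_ne_zero.2 hab.symm)]
  · rw [residueSum, residue_self_add_one f hab, residue_add_one_self f hab hn, ← add_mul,
      ← Finset.sum_add_distrib, twoPointCoeff, if_neg hn]
    congr 1
    exact Finset.sum_congr rfl fun k _ => by ring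

theorem twoPointCoeff_eq_coeff (hab : a ≠ b) {A B : ℂ → ℂ}
    {α β : FormalMultilinearSeries ℂ ℂ ℂ} (hA : HasFPowerSeriesAt A α 0)
    (hB : HasFPowerSeriesAt B β 0)
    (hf : ∀ w, f w = (w - a) * A ((w - a) * (w - b)) + (w - b) * B ((w - a) * (w - b))) (n : ℕ) :
    twoPointCoeff f a b n = α.coeff n := by
  refine mul_right_cancel₀ (sub_ne_zero.2 hab.symm) ?_
  rw [twoPointCoeff_mul_sub f hab, funext hf, residueSum_eq_sub_mul_coeff hab n hA hB, mul_comm]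

theorem hasSum_twoPointTaylor (hab : a ≠ b) {r : ℝ}
    (hf : DifferentiableOn ℂ f ((fun w => (w - a) * (w - b)) ⁻¹' Metric.ball 0 r)) {z : ℂ}
    (hz : ‖(z - a) * (z - b)‖ < r) :
    HasSum (fun n => (twoPointCoeff f a b n * (z - a) + twoPointCoeff f b a n * (z - b)) *
      ((z - a) * (z - b)) ^ n) (f z) := by
  obtain ⟨A, B, hA, hB, hf_eq⟩ :=
    exists_differentiableOn_sub_smul_add_sub_smul hab Metric.isOpen_ball hf
  simp only [smul_eq_mul] at hf_eq
  have hr : Metric.ball (0 : ℂ) r ∈ 𝓝 0 := Metric.ball_mem_nhds 0 ((norm_nonneg _).trans_lt hz)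
  have hA0 := (hA.analyticAt hr).hasFPowerSeriesAt
  have hB0 := (hB.analyticAt hr).hasFPowerSeriesAt
  have hf_eq' (w : ℂ) :
      f w = (w - b) * B ((w - b) * (w - a)) + (w - a) * A ((w - b) * (w - a)) := by
    rw [hf_eq, add_comm, mul_comm (w - a) (w - b)]
  have hu : (z - a) * (z - b) ∈ Metric.ball (0 : ℂ) r := by simpa using hz
  have hsum := ((Complex.hasSum_taylorSeries_on_ball hA hu).mul_left (z - a)).add
    ((Complex.hasSum_taylorSeries_on_ball hB hu).mul_left (z - b))
  rw [← hf_eq] at hsum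
  refine hsum.congr_fun fun n => ?_
  rw [twoPointCoeff_eq_coeff hab hA0 hB0 hf_eq, twoPointCoeff_eq_coeff hab.symm hB0 hA0 hf_eq']
  simp
  ring

end TwoPointTaylor

/-- Two-point Taylor expansion of an analytic function converges inside the Cassini oval. -/
theorem twoPointTaylor_tendsto
    (Ω : Set ℂ) (hΩ : IsOpen Ω) (f : ℂ → ℂ) (hf : DifferentiableOn ℂ f Ω)
    (z1 z2 : ℂ) (hz1 : z1 ∈ Ω) (hz2 : z2 ∈ Ω) (h12 : z1 ≠ z2)
    (z : ℂ) (hz : z ∈ Ω)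
    (r : ℝ) (hr : ‖(z - z1) * (z - z2)‖ < r)
    (hrΩ : ∀ w : ℂ, w ∉ Ω → r ≤ ‖(w - z1) * (w - z2)‖) :
    Filter.Tendsto
      (fun N : ℕ => ∑ n ∈ Finset.range N,
        (twoPointCoeff f z1 z2 n * (z - z1) + twoPointCoeff f z2 z1 n * (z - z2)) *
          ((z - z1) * (z - z2)) ^ n)
      Filter.atTop (nhds (f z)) := by
  have hoval : (fun w => (w - z1) * (w - z2)) ⁻¹' Metric.ball 0 r ⊆ Ω := fun w hw =>
    by_contra fun hwΩ => (hrΩ w hwΩ).not_gt (mem_ball_zero_iff.1 hw)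
  exact (hasSum_twoPointTaylor h12 (hf.mono hoval) hr).tendsto_sum_nat
end

section
/- Let Ω ⊆ ℂ be open, z1, z2 ∈ Ω with z1 ≠ z2, m ≥ 1 a natural number, and let g : ℂ → ℂ be analytic on Ω. Define f(z) = g(z)/(z−z1)^m for z ∈ Ω \ {z1}. Let z ∈ Ω with z ≠ z1, and suppose there exists r > |(z−z1)(z−z2)| such that |(w−z1)(w−z2)| ≥ r for every w ∈ ℂ \ Ω. Then f(z) = Σ_{n=0}^{∞} [d_n(z1,z2)(z−z1) + d_n(z2,z1)(z−z2)]·((z−z1)(z−z2))^n + Σ_{n=0}^{m−1} e_n(z1,z2)·(z−z2)^n·(z−z1)^{−n−1}, where the first series converges. -/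
/-- The Taylor–Laurent coefficient `d_n(z1,z2)` for `f = g/(z−z1)^m`, `g` analytic at `z1`. -/
noncomputable def taylorLaurentD1 (g f : ℂ → ℂ) (z1 z2 : ℂ) (m : ℕ) (n : ℕ) : ℂ :=
  if n = 0 then
    f z2 / (z2 - z1) - ∑ k ∈ Finset.range m,
      iteratedDeriv (m - k - 1) g z1 / ((Nat.factorial (m - k - 1) : ℂ) * (z2 - z1) ^ (k + 2))
  else
    -((-1 : ℂ) ^ n / (Nat.factorial n : ℂ)) *
      ((∑ k ∈ Finset.range (m + n),
          ((Nat.factorial (n + k) : ℂ) /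
              ((Nat.factorial k : ℂ) * (Nat.factorial (m + n - k - 1) : ℂ))) *
            iteratedDeriv (m + n - k - 1) g z1 / (z2 - z1) ^ (n + k + 2))
        + (n : ℂ) * ∑ k ∈ Finset.range (n + 1),
          ((Nat.factorial (n + k - 1) : ℂ) /
              ((Nat.factorial k : ℂ) * (Nat.factorial (n - k) : ℂ))) *
            iteratedDeriv (n - k) f z2 / (z1 - z2) ^ (n + k + 1))

/-- The Taylor–Laurent coefficient `d_n(z2,z1)` for `f = g/(z−z1)^m`, `g` analytic at `z1`. -/
noncomputable def taylorLaurentD2 (g f : ℂ → ℂ) (z1 z2 : ℂ) (m : ℕ) (n : ℕ) : ℂ :=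
  if n = 0 then iteratedDeriv m g z1 / ((Nat.factorial m : ℂ) * (z1 - z2))
  else
    -((-1 : ℂ) ^ n / (Nat.factorial n : ℂ)) *
      ((n : ℂ) * (∑ k ∈ Finset.range (m + n + 1),
          ((Nat.factorial (n + k - 1) : ℂ) /
              ((Nat.factorial k : ℂ) * (Nat.factorial (m + n - k) : ℂ))) *
            iteratedDeriv (m + n - k) g z1 / (z2 - z1) ^ (n + k + 1))
        + ∑ k ∈ Finset.range n,
          ((Nat.factorial (n + k) : ℂ) /
              ((Nat.factorial k : ℂ) * (Nat.factorial (n - k - 1) : ℂ))) *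
            iteratedDeriv (n - k - 1) f z2 / (z1 - z2) ^ (n + k + 2))

/-- The Taylor–Laurent coefficient `e_n(z1,z2)`. -/
noncomputable def taylorLaurentE (g : ℂ → ℂ) (z1 z2 : ℂ) (m : ℕ) (n : ℕ) : ℂ :=
  ((-1 : ℂ) ^ n / (Nat.factorial n : ℂ)) *
    ∑ k ∈ Finset.range (m - n),
      ((Nat.factorial (n + k) : ℂ) /
          ((Nat.factorial k : ℂ) * (Nat.factorial (m - n - k - 1) : ℂ))) *
        iteratedDeriv (m - n - k - 1) g z1 / (z2 - z1) ^ (n + k)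

/-!
Write `f = g / (w - z₁) ^ m` as its principal part at `z₁` plus the Taylor remainder `h` of `g`,
which is holomorphic. With `c` the midpoint of `z₁` and `z₂`, the product
`P = (w - z₁) * (w - z₂)` is `(w - c) ^ 2 - δ` for a constant `δ`, so the even and odd parts of `h`
about `c` give `h = A(P) + (w - c) * B(P)` with `A` and `B` holomorphic on a disc around `0`; their
Taylor series yield the expansion of `h` in powers of `P`. The principal part is expanded in powers
of `(w - z₂) / (w - z₁)` recursively.

The coefficients are residues of functions `g / ((w - z₁) ^ p * (w - z₂) ^ q)` at `z₁` and `z₂`, and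
replacing `g` by `h` only shifts `p`, since the removed polynomial terms contribute rational
functions whose residues sum to zero. Residues are encoded by Taylor coefficients, which avoids
contour integrals.
-/

section Factorial

open scoped Nat

variable {K : Type*} [Field K] [CharZero K]

lemma cast_multichoose_succ (n k : ℕ) :
    ((n + 1).multichoose k : K) = (n + k)! / (n ! * k !) := by
  rw [Nat.multichoose_eq, Nat.add_right_comm, Nat.add_sub_cancel, ← Nat.cast_add_choose K,
    Nat.choose_symm_add]

lemma div_factorial_succ_mul_cast (x : K) (n : ℕ) : x / (n + 1)! * (n + 1 : ℕ) = x / n ! := by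
  have := Nat.cast_add_one_ne_zero (R := K) n
  rw [Nat.factorial_succ, Nat.cast_mul]
  push_cast
  field_simp

end Factorial

section Residues

open Finset Filter
open scoped Nat Topology

variable {𝕜 : Type*} [NontriviallyNormedField 𝕜] {f g : 𝕜 → 𝕜} {a b : 𝕜}

/-- The coefficient of `(w - a) ^ n` in the Taylor expansion of `f` at `a`. -/
noncomputable def taylorCoeff (f : 𝕜 → 𝕜) (a : 𝕜) (n : ℕ) : 𝕜 :=
  iteratedDeriv n f a / n !

/-- The residue at `a` of `w ↦ f w / (w - a) ^ p`, for `f` analytic at `a`. -/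
noncomputable def poleResidue (f : 𝕜 → 𝕜) (a : 𝕜) : ℕ → 𝕜
  | 0 => 0
  | p + 1 => taylorCoeff f a p

/-- The sum of the residues at `a` and `b` of `w ↦ f w / ((w - a) ^ p * (w - b) ^ q)`, for `f`
analytic at the distinct points `a` and `b`. -/
noncomputable def twoPoleResidue (f : 𝕜 → 𝕜) (a b : 𝕜) (p q : ℕ) : 𝕜 :=
  poleResidue (fun w ↦ f w * ((w - b) ^ q)⁻¹) a p + poleResidue (fun w ↦ f w * ((w - a) ^ p)⁻¹) b q

@[simp]
lemma taylorCoeff_zero (f : 𝕜 → 𝕜) (a : 𝕜) : taylorCoeff f a 0 = f a := by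
  simp [taylorCoeff]

lemma taylorCoeff_const_succ (c a : 𝕜) (n : ℕ) : taylorCoeff (fun _ ↦ c) a (n + 1) = 0 := by
  simp [taylorCoeff, iteratedDeriv_const]

lemma taylorCoeff_congr (h : f =ᶠ[𝓝 a] g) (n : ℕ) : taylorCoeff f a n = taylorCoeff g a n := by
  rw [taylorCoeff, h.iteratedDeriv_eq, taylorCoeff]

lemma taylorCoeff_const_mul (c : 𝕜) (f : 𝕜 → 𝕜) (a : 𝕜) (n : ℕ) :
    taylorCoeff (fun w ↦ c * f w) a n = c * taylorCoeff f a n := by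
  simp only [taylorCoeff, iteratedDeriv_const_mul_field, mul_div_assoc]

lemma twoPoleResidue_zero_left (f : 𝕜 → 𝕜) (a b : 𝕜) (q : ℕ) :
    twoPoleResidue f a b 0 q = poleResidue f b q := by
  simp [twoPoleResidue, poleResidue]

lemma twoPoleResidue_comm (f : 𝕜 → 𝕜) (a b : 𝕜) (p q : ℕ) :
    twoPoleResidue f a b p q = twoPoleResidue f b a q p :=
  add_comm _ _

lemma poleResidue_const_mul (c : 𝕜) (f : 𝕜 → 𝕜) (a : 𝕜) (p : ℕ) :
    poleResidue (fun w ↦ c * f w) a p = c * poleResidue f a p := by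
  cases p <;> simp [poleResidue, taylorCoeff_const_mul]

lemma twoPoleResidue_const_mul (c : 𝕜) (f : 𝕜 → 𝕜) (a b : 𝕜) (p q : ℕ) :
    twoPoleResidue (fun w ↦ c * f w) a b p q = c * twoPoleResidue f a b p q := by
  simp only [twoPoleResidue, mul_assoc, poleResidue_const_mul, mul_add]

lemma analyticAt_inv_sub_pow (hab : a ≠ b) (n : ℕ) : AnalyticAt 𝕜 (fun w ↦ ((w - b) ^ n)⁻¹) a :=
  AnalyticAt.inv (by fun_prop) (pow_ne_zero n (sub_ne_zero.2 hab))

lemma analyticAt_dslope (hf : AnalyticAt 𝕜 f a) : AnalyticAt 𝕜 (dslope f a) a :=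
  let ⟨_, hp⟩ := hf
  hp.has_fpower_series_dslope_fslope.analyticAt

lemma analyticAt_dslope_of_ne (hab : a ≠ b) (hf : AnalyticAt 𝕜 f b) :
    AnalyticAt 𝕜 (dslope f a) b := by
  refine AnalyticAt.congr ?_ (dslope_eventuallyEq_slope_of_ne f hab.symm).symm
  simp only [slope_fun_def_field]
  exact (hf.fun_sub analyticAt_const).fun_div (by fun_prop) (sub_ne_zero.2 hab.symm)

lemma analyticAt_comp_add_mul_comp {A B : 𝕜 → 𝕜} (hA : AnalyticAt 𝕜 A 0) (hB : AnalyticAt 𝕜 B 0)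
    (c : 𝕜) {w : 𝕜} (hw : (w - a) * (w - b) = 0) :
    AnalyticAt 𝕜 (fun w ↦ A ((w - a) * (w - b)) + (w - c) * B ((w - a) * (w - b))) w := by
  have hP : AnalyticAt 𝕜 (fun w ↦ (w - a) * (w - b)) w := by fun_prop
  exact (hA.fun_comp_of_eq hP hw).fun_add
    (AnalyticAt.fun_mul (by fun_prop) (hB.fun_comp_of_eq hP hw))

lemma eq_add_sub_mul_dslope (f : 𝕜 → 𝕜) (a w : 𝕜) : f w = f a + (w - a) * dslope f a w := by
  rw [← smul_eq_mul, sub_smul_dslope, add_sub_cancel]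

/-- The function `h` in Taylor's formula `f w = ∑ k < m, cₖ * (w - a) ^ k + (w - a) ^ m * h w`. -/
noncomputable def taylorRemainder (f : 𝕜 → 𝕜) (a : 𝕜) (m : ℕ) : 𝕜 → 𝕜 :=
  (Function.swap dslope a)^[m] f

lemma taylorRemainder_succ (f : 𝕜 → 𝕜) (a : 𝕜) (m : ℕ) :
    taylorRemainder f a (m + 1) = taylorRemainder (dslope f a) a m :=
  rfl

/-- The principal part at `a` of `w ↦ f w / (w - a) ^ p`, for `f` analytic at `a`, evaluated at
`z`. -/
noncomputable def principalPart (f : 𝕜 → 𝕜) (a : 𝕜) (p : ℕ) (z : 𝕜) : 𝕜 :=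
  (∑ k ∈ range p, taylorCoeff f a k * (z - a) ^ k) / (z - a) ^ p

lemma principalPart_succ (f : 𝕜 → 𝕜) {z : 𝕜} (hz : z ≠ a) (p : ℕ) :
    principalPart f a (p + 1) z = (principalPart f a p z + poleResidue f a (p + 1)) / (z - a) := by
  have := sub_ne_zero.2 hz
  rw [principalPart, sum_range_succ, principalPart, poleResidue]
  field_simp
  ring

variable [CompleteSpace 𝕜]

lemma taylorCoeff_add (hf : AnalyticAt 𝕜 f a) (hg : AnalyticAt 𝕜 g a) (n : ℕ) :
    taylorCoeff (fun w ↦ f w + g w) a n = taylorCoeff f a n + taylorCoeff g a n := by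
  simp only [taylorCoeff, iteratedDeriv_fun_add hf.contDiffAt hg.contDiffAt, add_div]

lemma poleResidue_add (hf : AnalyticAt 𝕜 f a) (hg : AnalyticAt 𝕜 g a) (p : ℕ) :
    poleResidue (fun w ↦ f w + g w) a p = poleResidue f a p + poleResidue g a p := by
  cases p <;> simp [poleResidue, taylorCoeff_add hf hg]

lemma twoPoleResidue_add (hab : a ≠ b) (hfa : AnalyticAt 𝕜 f a) (hfb : AnalyticAt 𝕜 f b)
    (hga : AnalyticAt 𝕜 g a) (hgb : AnalyticAt 𝕜 g b) (p q : ℕ) :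
    twoPoleResidue (fun w ↦ f w + g w) a b p q =
      twoPoleResidue f a b p q + twoPoleResidue g a b p q := by
  simp only [twoPoleResidue, add_mul]
  have ha := analyticAt_inv_sub_pow hab q
  have hb := analyticAt_inv_sub_pow hab.symm p
  rw [poleResidue_add (hfa.fun_mul ha) (hga.fun_mul ha),
    poleResidue_add (hfb.fun_mul hb) (hgb.fun_mul hb)]
  ring

variable [CharZero 𝕜]

lemma taylorCoeff_mul (hf : AnalyticAt 𝕜 f a) (hg : AnalyticAt 𝕜 g a) (n : ℕ) :
    taylorCoeff (fun w ↦ f w * g w) a n =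
      ∑ k ∈ range (n + 1), taylorCoeff f a k * taylorCoeff g a (n - k) := by
  rw [taylorCoeff, iteratedDeriv_fun_mul hf.contDiffAt hg.contDiffAt, sum_div]
  refine sum_congr rfl fun k hk ↦ ?_
  rw [Nat.cast_choose 𝕜 (mem_range_succ_iff.1 hk), taylorCoeff, taylorCoeff]
  have := Nat.cast_ne_zero (R := 𝕜).2 n.factorial_ne_zero
  field_simp

lemma taylorCoeff_sub_mul (hf : AnalyticAt 𝕜 f a) (n : ℕ) :
    taylorCoeff (fun w ↦ (w - a) * f w) a (n + 1) = taylorCoeff f a n := by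
  rw [taylorCoeff_mul (by fun_prop) hf, sum_range_succ', sum_range_succ', sum_eq_zero]
  · simp [taylorCoeff]
  · intro k _
    simp [taylorCoeff, iteratedDeriv_succ', iteratedDeriv_const]

lemma taylorCoeff_dslope (hf : AnalyticAt 𝕜 f a) (n : ℕ) :
    taylorCoeff (dslope f a) a n = taylorCoeff f a (n + 1) := by
  have hd := analyticAt_dslope hf
  conv_rhs => rw [funext (eq_add_sub_mul_dslope f a)]
  rw [taylorCoeff_add analyticAt_const (by fun_prop), taylorCoeff_const_succ, zero_add,
    taylorCoeff_sub_mul hd]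

lemma taylorCoeff_inv_sub_pow (hab : a ≠ b) (q k : ℕ) :
    taylorCoeff (fun w ↦ ((w - b) ^ q)⁻¹) a k = (-1) ^ q * q.multichoose k / (b - a) ^ (q + k) := by
  have hba : b - a ≠ 0 := sub_ne_zero.2 hab.symm
  induction q generalizing k with
  | zero => cases k <;> simp [taylorCoeff_const_succ]
  | succ q ihq =>
    have hG := analyticAt_inv_sub_pow hab (q + 1)
    induction k with
    | zero =>
      rw [taylorCoeff_zero, ← neg_sub b a, neg_pow, mul_inv, ← inv_pow, inv_neg_one,
        Nat.multichoose_zero_right, Nat.cast_one, mul_one, add_zero, div_eq_mul_inv]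
    | succ k ihk =>
      have hw : (fun w ↦ ((w - b) ^ q)⁻¹) =ᶠ[𝓝 a]
          fun w ↦ (w - a) * ((w - b) ^ (q + 1))⁻¹ + (a - b) * ((w - b) ^ (q + 1))⁻¹ := by
        filter_upwards [eventually_ne_nhds hab] with w hw
        have := sub_ne_zero.2 hw
        field_simp
        ring
      have hrec := taylorCoeff_congr hw (k + 1)
      rw [taylorCoeff_add (by fun_prop) (by fun_prop), taylorCoeff_sub_mul hG,
        taylorCoeff_const_mul, ihk, ihq, ← neg_sub b a] at hrec
      refine mul_left_cancel₀ hba ?_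
      rw [Nat.multichoose_succ_succ, Nat.cast_add]
      linear_combination (norm := (field_simp; ring)) hrec

lemma poleResidue_mul_inv_sub_pow (hab : a ≠ b) (hf : AnalyticAt 𝕜 f a) (p q : ℕ) :
    poleResidue (fun w ↦ f w * ((w - b) ^ q)⁻¹) a p =
      (-1) ^ q *
        ∑ k ∈ range p, q.multichoose k * taylorCoeff f a (p - 1 - k) / (b - a) ^ (q + k) := by
  cases p with
  | zero => simp [poleResidue]
  | succ p =>
    rw [poleResidue, funext fun w ↦ mul_comm (f w) _,
      taylorCoeff_mul (analyticAt_inv_sub_pow hab q) hf, mul_sum]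
    refine sum_congr rfl fun k _ ↦ ?_
    rw [taylorCoeff_inv_sub_pow hab, Nat.add_sub_cancel]
    ring

lemma poleResidue_sub_mul (hf : AnalyticAt 𝕜 f a) (p : ℕ) :
    poleResidue (fun w ↦ (w - a) * f w) a (p + 1) = poleResidue f a p := by
  cases p with
  | zero => simp [poleResidue]
  | succ p => exact taylorCoeff_sub_mul hf p

lemma twoPoleResidue_sub_mul_left (hab : a ≠ b) (hf : AnalyticAt 𝕜 f a) (p q : ℕ) :
    twoPoleResidue (fun w ↦ (w - a) * f w) a b (p + 1) q = twoPoleResidue f a b p q := by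
  have hw : (fun w ↦ (w - a) * f w * ((w - a) ^ (p + 1))⁻¹) =ᶠ[𝓝 b]
      fun w ↦ f w * ((w - a) ^ p)⁻¹ := by
    filter_upwards [eventually_ne_nhds hab.symm] with w hw
    have := sub_ne_zero.2 hw
    field_simp
    ring
  simp only [twoPoleResidue]
  congr 1
  · simp only [mul_assoc]
    exact poleResidue_sub_mul (hf.mul (analyticAt_inv_sub_pow hab q)) p
  · cases q with
    | zero => rfl
    | succ q => exact taylorCoeff_congr hw q

lemma twoPoleResidue_sub_mul_right (hab : a ≠ b) (hf : AnalyticAt 𝕜 f b) (p q : ℕ) :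
    twoPoleResidue (fun w ↦ (w - b) * f w) a b p (q + 1) = twoPoleResidue f a b p q := by
  rw [twoPoleResidue_comm, twoPoleResidue_sub_mul_left hab.symm hf, twoPoleResidue_comm]

-- The residues of a rational function that decays like `w⁻²` at infinity sum to zero.
lemma twoPoleResidue_const (hab : a ≠ b) (c : 𝕜) {p q : ℕ} (hpq : 2 ≤ p + q) :
    twoPoleResidue (fun _ ↦ c) a b p q = 0 := by
  have hzero (b : 𝕜) : ∀ {q : ℕ}, 2 ≤ q → poleResidue (fun _ ↦ c) b q = 0
    | q + 2, _ => taylorCoeff_const_succ c b q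
  have hstep (p q : ℕ) : (b - a) * twoPoleResidue (fun _ ↦ c) a b (p + 1) (q + 1) =
      twoPoleResidue (fun _ ↦ c) a b p (q + 1) - twoPoleResidue (fun _ ↦ c) a b (p + 1) q := by
    have h (w : 𝕜) : (b - a) * c = (w - a) * c + -1 * ((w - b) * c) := by ring
    rw [← twoPoleResidue_const_mul, funext h, twoPoleResidue_add hab (by fun_prop) (by fun_prop)
      (by fun_prop) (by fun_prop), twoPoleResidue_const_mul,
      twoPoleResidue_sub_mul_left hab analyticAt_const,
      twoPoleResidue_sub_mul_right hab analyticAt_const]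
    ring
  induction p generalizing q with
  | zero => rw [twoPoleResidue_zero_left, hzero b (by omega)]
  | succ p ihp =>
    induction q with
    | zero => rw [twoPoleResidue_comm, twoPoleResidue_zero_left, hzero a (by omega)]
    | succ q ihq =>
      refine (mul_eq_zero.1 ?_).resolve_left (sub_ne_zero.2 hab.symm)
      rw [hstep, sub_eq_zero]
      obtain hpq | hpq : 2 ≤ p + q + 1 ∨ p = 0 ∧ q = 0 := by omega
      · rw [ihp (by omega), ihq (by omega)]
      · obtain ⟨rfl, rfl⟩ := hpq
        rw [twoPoleResidue_comm _ _ _ 1, twoPoleResidue_zero_left, twoPoleResidue_zero_left]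
        simp [poleResidue]

lemma eq_sum_taylorCoeff_add_taylorRemainder (hf : AnalyticAt 𝕜 f a) (m : ℕ) (w : 𝕜) :
    f w = ∑ k ∈ range m, taylorCoeff f a k * (w - a) ^ k +
      (w - a) ^ m * taylorRemainder f a m w := by
  induction m generalizing f with
  | zero => simp [taylorRemainder]
  | succ m ih =>
    rw [sum_range_succ', taylorRemainder_succ, eq_add_sub_mul_dslope f a w,
      ih (analyticAt_dslope hf), taylorCoeff_zero, pow_zero, mul_add, mul_sum]
    simp only [taylorCoeff_dslope hf, pow_succ]
    ring_nf

lemma twoPoleResidue_dslope (hab : a ≠ b) (ha : AnalyticAt 𝕜 f a) (hb : AnalyticAt 𝕜 f b)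
    {p q : ℕ} (hpq : 1 ≤ p + q) :
    twoPoleResidue (dslope f a) a b p q = twoPoleResidue f a b (p + 1) q := by
  have hda := analyticAt_dslope ha
  have hdb := analyticAt_dslope_of_ne hab hb
  conv_rhs => rw [funext (eq_add_sub_mul_dslope f a)]
  rw [twoPoleResidue_add hab (by fun_prop) (by fun_prop) (by fun_prop) (by fun_prop),
    twoPoleResidue_const hab _ (by omega), zero_add, twoPoleResidue_sub_mul_left hab hda]

lemma twoPoleResidue_taylorRemainder (hab : a ≠ b) (ha : AnalyticAt 𝕜 f a)
    (hb : AnalyticAt 𝕜 f b) (m : ℕ) {p q : ℕ} (hpq : 1 ≤ p + q) :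
    twoPoleResidue (taylorRemainder f a m) a b p q = twoPoleResidue f a b (m + p) q := by
  induction m generalizing f with
  | zero => rw [zero_add]; rfl
  | succ m ih =>
    rw [taylorRemainder_succ, ih (analyticAt_dslope ha) (analyticAt_dslope_of_ne hab hb),
      twoPoleResidue_dslope hab ha hb (by omega), add_right_comm]

lemma twoPoleResidue_comp_add_mul_comp (hab : a ≠ b) {A B : 𝕜 → 𝕜} (hA : AnalyticAt 𝕜 A 0)
    (hB : AnalyticAt 𝕜 B 0) (c : 𝕜) (n : ℕ) :
    twoPoleResidue (fun w ↦ A ((w - a) * (w - b)) + (w - c) * B ((w - a) * (w - b))) a b n (n + 1) =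
      taylorCoeff A 0 n + (b - c) * taylorCoeff B 0 n := by
  induction n generalizing A B with
  | zero => simp [twoPoleResidue_zero_left, poleResidue]
  | succ n ih =>
    have hA' := analyticAt_dslope hA
    have hB' := analyticAt_dslope hB
    let F : 𝕜 → 𝕜 := fun w ↦ dslope A 0 ((w - a) * (w - b)) +
      (w - c) * dslope B 0 ((w - a) * (w - b))
    have hFa : AnalyticAt 𝕜 F a := analyticAt_comp_add_mul_comp hA' hB' c (by simp)
    have hFb : AnalyticAt 𝕜 F b := analyticAt_comp_add_mul_comp hA' hB' c (by simp)
    have hF (w : 𝕜) : A ((w - a) * (w - b)) + (w - c) * B ((w - a) * (w - b)) =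
        (A 0 + (a - c) * B 0) + (w - a) * (B 0 + (w - b) * F w) := by
      rw [eq_add_sub_mul_dslope A 0, eq_add_sub_mul_dslope B 0]
      simp only [F]
      ring
    rw [funext hF, twoPoleResidue_add hab (by fun_prop) (by fun_prop) (by fun_prop) (by fun_prop),
      twoPoleResidue_const hab _ (by omega), zero_add,
      twoPoleResidue_sub_mul_left hab (by fun_prop),
      twoPoleResidue_add hab (by fun_prop) (by fun_prop) (by fun_prop) (by fun_prop),
      twoPoleResidue_const hab _ (by omega), zero_add,
      twoPoleResidue_sub_mul_right hab hFb, ih hA' hB', taylorCoeff_dslope hA,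
      taylorCoeff_dslope hB]

lemma poleResidue_mul_inv_sub_pow_succ (hab : a ≠ b) (hf : AnalyticAt 𝕜 f a) (p n : ℕ) :
    poleResidue (fun w ↦ f w * ((w - b) ^ (n + 1))⁻¹) a p =
      (-1) ^ (n + 1) / n ! * ∑ k ∈ range p, ((n + k)! : 𝕜) / (k ! * (p - k - 1)!) *
        iteratedDeriv (p - k - 1) f a / (b - a) ^ (n + k + 1) := by
  rw [poleResidue_mul_inv_sub_pow hab hf, mul_sum, mul_sum]
  refine sum_congr rfl fun k _ ↦ ?_
  rw [cast_multichoose_succ, taylorCoeff, Nat.sub_right_comm, Nat.add_right_comm]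
  simp only [div_eq_mul_inv, mul_inv]
  ring

lemma poleResidue_mul_inv_sub_pow_div (hab : a ≠ b) (hf : AnalyticAt 𝕜 f a) (p n : ℕ) :
    poleResidue (fun w ↦ f w * ((w - b) ^ (n + 1))⁻¹) a p / (b - a) =
      (-1) ^ (n + 1) / n ! * ∑ k ∈ range p, ((n + k)! : 𝕜) / (k ! * (p - k - 1)!) *
        iteratedDeriv (p - k - 1) f a / (b - a) ^ (n + k + 2) := by
  rw [poleResidue_mul_inv_sub_pow_succ hab hf, mul_div_assoc, sum_div]
  simp only [div_div, ← pow_succ, add_assoc, Nat.reduceAdd]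

-- The truncated subtraction is the shape in which the sums with `n + 1` for `n` occur in
-- `taylorLaurentD1` and `taylorLaurentD2`.
lemma poleResidue_succ_mul_inv_sub_pow_div (hab : a ≠ b) (hf : AnalyticAt 𝕜 f a) (p n : ℕ) :
    poleResidue (fun w ↦ f w * ((w - b) ^ (n + 1))⁻¹) a (p + 1) / (b - a) =
      (-1) ^ (n + 1) / n ! * ∑ k ∈ range (p + 1), ((n + 1 + k - 1)! : 𝕜) / (k ! * (p - k)!) *
        iteratedDeriv (p - k) f a / (b - a) ^ (n + 1 + k + 1) := by
  rw [poleResidue_mul_inv_sub_pow_div hab hf]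
  refine congrArg _ (sum_congr rfl fun k _ ↦ ?_)
  rw [Nat.sub_right_comm, Nat.add_sub_cancel, Nat.add_right_comm n 1 k, Nat.add_sub_cancel]

lemma div_sub_pow_eq_principalPart_add (hf : AnalyticAt 𝕜 f a) {z : 𝕜} (hz : z ≠ a) (p : ℕ) :
    f z / (z - a) ^ p = principalPart f a p z + taylorRemainder f a p z := by
  rw [eq_sum_taylorCoeff_add_taylorRemainder hf p z, add_div, principalPart,
    mul_div_cancel_left₀ _ (pow_ne_zero p (sub_ne_zero.2 hz))]

lemma principalPart_sub_mul (hf : AnalyticAt 𝕜 f a) {z : 𝕜} (hz : z ≠ a) (p : ℕ) :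
    principalPart (fun w ↦ (w - a) * f w) a (p + 1) z = principalPart f a p z := by
  have := sub_ne_zero.2 hz
  rw [principalPart, sum_range_succ', principalPart]
  simp only [taylorCoeff_sub_mul hf, taylorCoeff_zero, sub_self, zero_mul, add_zero, pow_succ,
    ← mul_assoc, ← sum_mul]
  field_simp

-- Division by `z - w` turns `(z - a) * (w - b) - (z - b) * (w - a) = (a - b) * (z - w)` into this
-- recursion.
lemma principalPart_succ_eq (hab : a ≠ b) (hf : AnalyticAt 𝕜 f a) {z : 𝕜} (hz : z ≠ a) (p : ℕ) :
    principalPart f a (p + 1) z =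
      ((a - b) * poleResidue (fun w ↦ f w * (w - b)⁻¹) a (p + 1) +
        (z - b) * principalPart (fun w ↦ f w * (w - b)⁻¹) a p z) / (z - a) := by
  have hG : AnalyticAt 𝕜 (fun w ↦ f w * (w - b)⁻¹) a :=
    hf.fun_mul (by simpa using analyticAt_inv_sub_pow hab 1)
  set G : 𝕜 → 𝕜 := fun w ↦ f w * (w - b)⁻¹
  have hfG : f =ᶠ[𝓝 a] fun w ↦ (w - a) * G w + (a - b) * G w := by
    filter_upwards [eventually_ne_nhds hab] with w hw
    have := sub_ne_zero.2 hw
    simp only [G]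
    field_simp
    ring
  have hsplit : principalPart f a (p + 1) z =
      principalPart (fun w ↦ (w - a) * G w) a (p + 1) z +
        (a - b) * principalPart G a (p + 1) z := by
    simp only [principalPart, taylorCoeff_congr hfG, mul_div_assoc', mul_sum, ← add_div,
      ← sum_add_distrib]
    refine congrArg (· / _) (sum_congr rfl fun k _ ↦ ?_)
    rw [taylorCoeff_add (by fun_prop) (by fun_prop), taylorCoeff_const_mul]
    ring
  have := sub_ne_zero.2 hz
  rw [hsplit, principalPart_sub_mul hG hz, principalPart_succ G hz]
  field_simp
  ring

lemma principalPart_eq_sum_poleResidue (hab : a ≠ b) (hf : AnalyticAt 𝕜 f a) {z : 𝕜} (hz : z ≠ a)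
    (p : ℕ) :
    principalPart f a p z =
      ∑ n ∈ range p, (a - b) * poleResidue (fun w ↦ f w * ((w - b) ^ (n + 1))⁻¹) a (p - n) *
        (z - b) ^ n / (z - a) ^ (n + 1) := by
  induction p generalizing f with
  | zero => simp [principalPart]
  | succ p ih =>
    have hG : AnalyticAt 𝕜 (fun w ↦ f w * (w - b)⁻¹) a :=
      hf.fun_mul (by simpa using analyticAt_inv_sub_pow hab 1)
    have hpow (n : ℕ) (w : 𝕜) :
        f w * (w - b)⁻¹ * ((w - b) ^ (n + 1))⁻¹ = f w * ((w - b) ^ (n + 1 + 1))⁻¹ := by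
      rw [pow_succ' _ (n + 1), mul_inv, mul_assoc]
    have hza := sub_ne_zero.2 hz
    rw [principalPart_succ_eq hab hf hz, ih hG, sum_range_succ', add_comm, add_div, mul_sum,
      sum_div]
    simp only [hpow, Nat.add_sub_add_right, zero_add, pow_one, pow_zero, mul_one, Nat.sub_zero]
    refine congrArg (· + _) (sum_congr rfl fun n _ ↦ ?_)
    field_simp
    ring

end Residues

section TwoPointTaylor

open Set
open scoped Topology

variable {W : Set ℂ} {z₁ z₂ : ℂ}

lemma differentiableOn_of_comp_sq (hW : IsOpen W) {K : ℂ → ℂ}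
    (hK : DifferentiableOn ℂ (fun v ↦ K (v ^ 2)) {v | v ^ 2 ∈ W}) : DifferentiableOn ℂ K W := by
  have hK' {v : ℂ} (hv : v ^ 2 ∈ W) : DifferentiableAt ℂ (fun v ↦ K (v ^ 2)) v :=
    hK.differentiableAt ((hW.preimage (continuous_pow 2)).mem_nhds hv)
  have hsqrt (s : ℂ) : (s ^ (2⁻¹ : ℂ)) ^ 2 = s := Complex.cpow_ofNat_inv_pow s 2
  have hne : ∀ s ∈ W, s ≠ 0 → DifferentiableAt ℂ K s := by
    intro s hs hs0
    obtain ⟨v, rfl⟩ : ∃ v : ℂ, v ^ 2 = s := ⟨_, hsqrt s⟩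
    have hsq : HasStrictDerivAt (fun v : ℂ ↦ v ^ 2) (2 * v) v := by
      simpa using hasStrictDerivAt_pow 2 v
    have hv : 2 * v ≠ 0 := by simpa using hs0
    have hL := (hsq.to_localInverse hv).hasDerivAt.differentiableAt
    have hLv := (hsq.eventually_left_inverse hv).self_of_nhds
    refine ((hLv.symm ▸ hK' hs).comp (v ^ 2) hL).congr_of_eventuallyEq ?_
    filter_upwards [hsq.eventually_right_inverse hv] with s hs
    exact congrArg K hs.symm
  intro s hs
  refine DifferentiableAt.differentiableWithinAt ?_
  obtain rfl | hs0 := eq_or_ne s 0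
  · refine (Complex.analyticAt_of_differentiable_on_punctured_nhds_of_continuousAt
      ?_ ?_).differentiableAt
    · filter_upwards [nhdsWithin_le_nhds (hW.mem_nhds hs), self_mem_nhdsWithin] using hne
    · have hc := Complex.continuousAt_cpow_const_of_re_pos (z := 0) (w := 2⁻¹) (by simp) (by simp)
      simpa only [Function.comp_def, hsqrt] using
        (hK' (by rwa [hsqrt])).continuousAt.comp (f := fun s : ℂ ↦ s ^ (2⁻¹ : ℂ)) hc
  · exact hne s hs hs0

lemma exists_differentiableOn_comp_sq_of_even_s10 (hW : IsOpen W) {H : ℂ → ℂ}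
    (hH : DifferentiableOn ℂ H {v | v ^ 2 ∈ W}) (heven : Function.Even H) :
    ∃ K : ℂ → ℂ, DifferentiableOn ℂ K W ∧ ∀ v, H v = K (v ^ 2) := by
  have hK (v : ℂ) : H v = H ((v ^ 2) ^ (2⁻¹ : ℂ)) := by
    obtain h | h := sq_eq_sq_iff_eq_or_eq_neg.1 (Complex.cpow_ofNat_inv_pow (v ^ 2) 2)
    · rw [h]
    · rw [h, heven]
  refine ⟨fun s ↦ H (s ^ (2⁻¹ : ℂ)), differentiableOn_of_comp_sq hW ?_, hK⟩
  rwa [← funext hK]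

lemma differentiableOn_dslope_of_isOpen {f : ℂ → ℂ} (hW : IsOpen W) (hf : DifferentiableOn ℂ f W)
    (c : ℂ) : DifferentiableOn ℂ (dslope f c) W := by
  by_cases hc : c ∈ W
  · exact (Complex.differentiableOn_dslope (hW.mem_nhds hc)).2 hf
  · exact (differentiableOn_dslope_of_notMem hc).2 hf

lemma differentiableOn_taylorRemainder {f : ℂ → ℂ} (hW : IsOpen W) (hf : DifferentiableOn ℂ f W)
    (c : ℂ) (m : ℕ) : DifferentiableOn ℂ (taylorRemainder f c m) W := by
  induction m generalizing f with
  | zero => exact hf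
  | succ _ ih => exact ih (differentiableOn_dslope_of_isOpen hW hf c)

lemma exists_differentiableOn_comp_sq_add_mul_comp_sq (hW : IsOpen W) {H : ℂ → ℂ}
    (hH : DifferentiableOn ℂ H {v | v ^ 2 ∈ W}) :
    ∃ A B : ℂ → ℂ, DifferentiableOn ℂ A W ∧ DifferentiableOn ℂ B W ∧
      ∀ v, H v = A (v ^ 2) + v * B (v ^ 2) := by
  have hV : IsOpen {v : ℂ | v ^ 2 ∈ W} := hW.preimage (continuous_pow 2)
  have hHneg : DifferentiableOn ℂ (fun v ↦ H (-v)) {v | v ^ 2 ∈ W} :=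
    hH.comp (by fun_prop) fun v hv ↦ by simpa using hv
  let O : ℂ → ℂ := fun v ↦ (H v - H (-v)) / 2
  have hO : DifferentiableOn ℂ O {v | v ^ 2 ∈ W} := (hH.sub hHneg).div_const 2
  obtain ⟨A, hA, hAeq⟩ := exists_differentiableOn_comp_sq_of_even_s10 hW
    ((hH.fun_add hHneg).div_const 2) fun v ↦ by simp only [neg_neg, add_comm]
  obtain ⟨B, hB, hBeq⟩ := exists_differentiableOn_comp_sq_of_even_s10 hW
      (differentiableOn_dslope_of_isOpen hV hO 0) fun v ↦ by
    obtain rfl | hv := eq_or_ne v 0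
    · rw [neg_zero]
    · rw [dslope_of_ne _ (neg_ne_zero.2 hv), dslope_of_ne _ hv]
      simp only [slope_def_field, O, neg_neg, neg_zero, sub_self, sub_zero, zero_div]
      field_simp
      ring
  refine ⟨A, B, hA, hB, fun v ↦ ?_⟩
  have hodd : O v = v * B (v ^ 2) := by
    rw [← hBeq, eq_add_sub_mul_dslope O 0 v]
    simp [O]
  rw [← hAeq, ← hodd]
  simp only [O]
  ring

lemma exists_differentiableOn_comp_add_mul_comp (hW : IsOpen W) {h : ℂ → ℂ}
    (hh : DifferentiableOn ℂ h {w | (w - z₁) * (w - z₂) ∈ W}) :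
    ∃ A B : ℂ → ℂ, DifferentiableOn ℂ A W ∧ DifferentiableOn ℂ B W ∧
      ∀ w, h w = A ((w - z₁) * (w - z₂)) +
        (w - (z₁ + z₂) / 2) * B ((w - z₁) * (w - z₂)) := by
  let c := (z₁ + z₂) / 2
  let δ := ((z₁ - z₂) / 2) ^ 2
  have hsq (w : ℂ) : (w - z₁) * (w - z₂) = (w - c) ^ 2 - δ := by simp only [c, δ]; ring
  have hcv : DifferentiableOn ℂ (fun v ↦ h (v + c)) {v | v ^ 2 ∈ {s | s - δ ∈ W}} :=
    hh.comp (by fun_prop) fun v hv ↦ by simpa [hsq] using hv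
  obtain ⟨A, B, hA, hB, hAB⟩ := exists_differentiableOn_comp_sq_add_mul_comp_sq
    (hW.preimage (continuous_id.sub continuous_const)) hcv
  have hmaps : MapsTo (fun s ↦ s + δ) W {s | s - δ ∈ W} := fun s hs ↦ by simpa using hs
  refine ⟨fun s ↦ A (s + δ), fun s ↦ B (s + δ), hA.comp (by fun_prop) hmaps,
    hB.comp (by fun_prop) hmaps, fun w ↦ ?_⟩
  simpa only [hsq, sub_add_cancel] using hAB (w - c)

lemma hasSum_taylorCoeff {f : ℂ → ℂ} {c z : ℂ} {r : ℝ} (hf : DifferentiableOn ℂ f (Metric.ball c r))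
    (hz : z ∈ Metric.ball c r) : HasSum (fun n ↦ taylorCoeff f c n * (z - c) ^ n) (f z) := by
  convert! Complex.hasSum_taylorSeries_on_ball hf hz using 2 with n
  simp only [taylorCoeff, smul_eq_mul]
  ring

theorem hasSum_twoPoint_taylor (h12 : z₁ ≠ z₂) {h : ℂ → ℂ} {r : ℝ}
    (hh : DifferentiableOn ℂ h {w | (w - z₁) * (w - z₂) ∈ Metric.ball 0 r}) {z : ℂ}
    (hz : (z - z₁) * (z - z₂) ∈ Metric.ball 0 r) :
    HasSum (fun n ↦ (twoPoleResidue h z₁ z₂ n (n + 1) / (z₂ - z₁) * (z - z₁) +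
      twoPoleResidue h z₁ z₂ (n + 1) n / (z₁ - z₂) * (z - z₂)) * ((z - z₁) * (z - z₂)) ^ n)
      (h z) := by
  obtain ⟨A, B, hA, hB, hAB⟩ := exists_differentiableOn_comp_add_mul_comp Metric.isOpen_ball hh
  have h0 : Metric.ball (0 : ℂ) r ∈ 𝓝 0 := Metric.ball_mem_nhds 0 (Metric.pos_of_mem_ball hz)
  have hA0 := hA.analyticAt h0
  have hB0 := hB.analyticAt h0
  set c := (z₁ + z₂) / 2
  have hres₁ (n : ℕ) : twoPoleResidue h z₁ z₂ n (n + 1) =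
      taylorCoeff A 0 n + (z₂ - c) * taylorCoeff B 0 n := by
    rw [funext hAB, twoPoleResidue_comp_add_mul_comp h12 hA0 hB0]
  have hres₂ (n : ℕ) : twoPoleResidue h z₁ z₂ (n + 1) n =
      taylorCoeff A 0 n + (z₁ - c) * taylorCoeff B 0 n := by
    rw [twoPoleResidue_comm, funext hAB]
    simp only [mul_comm (_ - z₁) (_ - z₂)]
    rw [twoPoleResidue_comp_add_mul_comp h12.symm hA0 hB0]
  rw [hAB z]
  refine ((hasSum_taylorCoeff hA hz).add ((hasSum_taylorCoeff hB hz).mul_left (z - c))).congr_fun ?_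
  intro n
  have h21 : z₂ - z₁ ≠ 0 := sub_ne_zero.2 h12.symm
  rw [hres₁, hres₂, ← neg_sub z₂ z₁, sub_zero]
  field_simp
  ring

end TwoPointTaylor

section Coefficients

open Finset
open scoped Nat

variable {f g : ℂ → ℂ} {z₁ z₂ z : ℂ} {m : ℕ}

lemma taylorLaurentD1_eq (h12 : z₁ ≠ z₂) (hg : AnalyticAt ℂ g z₁) (hf : AnalyticAt ℂ f z₂)
    (hfg : ∀ w, f w = g w / (w - z₁) ^ m) (n : ℕ) :
    taylorLaurentD1 g f z₁ z₂ m n = twoPoleResidue g z₁ z₂ (m + n) (n + 1) / (z₂ - z₁) := by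
  have hfz (w : ℂ) : g w * ((w - z₁) ^ (m + n))⁻¹ = f w * ((w - z₁) ^ n)⁻¹ := by
    rw [hfg, pow_add, mul_inv, div_eq_mul_inv, mul_assoc]
  rw [twoPoleResidue, funext hfz, add_div, poleResidue_mul_inv_sub_pow_div h12 hg, taylorLaurentD1]
  cases n with
  | zero =>
    have hfact (k : ℕ) : ((0 + k)! : ℂ) / (k ! * (m - k - 1)!) = 1 / (m - k - 1)! := by
      rw [zero_add, div_mul_cancel_left₀ (Nat.cast_ne_zero.2 k.factorial_ne_zero), one_div]
    have hres : poleResidue (fun w ↦ f w * ((w - z₁) ^ 0)⁻¹) z₂ 1 = f z₂ := by simp [poleResidue]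
    rw [if_pos rfl, hres]
    simp only [add_zero, hfact, div_mul_eq_mul_div]
    simp only [one_mul, div_div, zero_add, pow_one, Nat.factorial_zero, Nat.cast_one, div_one]
    ring
  | succ n =>
    rw [if_neg n.succ_ne_zero, ← neg_sub z₁ z₂, div_neg (b := z₁ - z₂),
      poleResidue_succ_mul_inv_sub_pow_div h12.symm hf, neg_sub,
      ← div_factorial_succ_mul_cast _ n]
    ring

lemma taylorLaurentD2_eq (h12 : z₁ ≠ z₂) (hg : AnalyticAt ℂ g z₁) (hf : AnalyticAt ℂ f z₂)
    (hfg : ∀ w, f w = g w / (w - z₁) ^ m) (n : ℕ) :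
    taylorLaurentD2 g f z₁ z₂ m n = twoPoleResidue g z₁ z₂ (m + n + 1) n / (z₁ - z₂) := by
  have hfz (w : ℂ) : g w * ((w - z₁) ^ (m + n + 1))⁻¹ = f w * ((w - z₁) ^ (n + 1))⁻¹ := by
    rw [hfg, add_assoc, pow_add, mul_inv, div_eq_mul_inv, mul_assoc]
  rw [twoPoleResidue, funext hfz, add_div, poleResidue_mul_inv_sub_pow_div h12.symm hf,
    taylorLaurentD2]
  cases n with
  | zero => simp [poleResidue, taylorCoeff, div_div]
  | succ n =>
    rw [if_neg n.succ_ne_zero, ← neg_sub z₂ z₁, div_neg (b := z₂ - z₁),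
      poleResidue_succ_mul_inv_sub_pow_div h12 hg, neg_sub,
      ← div_factorial_succ_mul_cast _ n]
    ring

lemma taylorLaurentE_eq (h12 : z₁ ≠ z₂) (hg : AnalyticAt ℂ g z₁) (m n : ℕ) :
    taylorLaurentE g z₁ z₂ m n =
      (z₁ - z₂) * poleResidue (fun w ↦ g w * ((w - z₂) ^ (n + 1))⁻¹) z₁ (m - n) := by
  have h21 : z₂ - z₁ ≠ 0 := sub_ne_zero.2 h12.symm
  rw [taylorLaurentE, poleResidue_mul_inv_sub_pow_succ h12 hg, mul_sum, mul_sum, mul_sum]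
  refine sum_congr rfl fun k _ ↦ ?_
  rw [pow_succ _ (n + k), ← neg_sub z₂ z₁]
  field_simp
  ring

lemma hasSum_taylorLaurent (h12 : z₁ ≠ z₂) (hfg : ∀ w, f w = g w / (w - z₁) ^ m) {r : ℝ}
    (hg : DifferentiableOn ℂ g {w | (w - z₁) * (w - z₂) ∈ Metric.ball 0 r})
    (hz : (z - z₁) * (z - z₂) ∈ Metric.ball 0 r) :
    HasSum (fun n ↦ (taylorLaurentD1 g f z₁ z₂ m n * (z - z₁) +
      taylorLaurentD2 g f z₁ z₂ m n * (z - z₂)) * ((z - z₁) * (z - z₂)) ^ n)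
      (taylorRemainder g z₁ m z) := by
  have hr : 0 < r := Metric.pos_of_mem_ball hz
  have hU : IsOpen {w | (w - z₁) * (w - z₂) ∈ Metric.ball 0 r} :=
    Metric.isOpen_ball.preimage (by fun_prop)
  have hg₁ : AnalyticAt ℂ g z₁ := hg.analyticAt (hU.mem_nhds (by simpa using hr))
  have hg₂ : AnalyticAt ℂ g z₂ := hg.analyticAt (hU.mem_nhds (by simpa using hr))
  have hf₂ : AnalyticAt ℂ f z₂ := by
    rw [funext hfg]
    exact hg₂.fun_div (by fun_prop) (pow_ne_zero m (sub_ne_zero.2 h12.symm))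
  simp only [taylorLaurentD1_eq h12 hg₁ hf₂ hfg, taylorLaurentD2_eq h12 hg₁ hf₂ hfg]
  have hh := differentiableOn_taylorRemainder hU hg z₁ m
  convert! hasSum_twoPoint_taylor h12 hh hz using 6 with n
  · rw [twoPoleResidue_taylorRemainder h12 hg₁ hg₂ m (by omega)]
  · rw [twoPoleResidue_taylorRemainder h12 hg₁ hg₂ m (by omega), add_assoc]

end Coefficients

/-- Two-point Taylor–Laurent expansion of `f = g/(z−z1)^m`, `g` analytic on `Ω`:
inside the region of convergence, `f(z)` is the sum of the convergent regular series
(coefficients `d_n`) and the finite singular sum (coefficients `e_n`). -/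
theorem taylorLaurent_expansion
    (Ω : Set ℂ) (hΩ : IsOpen Ω) (g : ℂ → ℂ) (hg : DifferentiableOn ℂ g Ω)
    (z1 z2 : ℂ) (hz1 : z1 ∈ Ω) (hz2 : z2 ∈ Ω) (h12 : z1 ≠ z2)
    (m : ℕ) (hm : 1 ≤ m)
    (f : ℂ → ℂ) (hfdef : ∀ w, f w = g w / (w - z1) ^ m)
    (z : ℂ) (hz : z ∈ Ω) (hzz1 : z ≠ z1)
    (r : ℝ) (hr : ‖(z - z1) * (z - z2)‖ < r)
    (hrΩ : ∀ w : ℂ, w ∉ Ω → r ≤ ‖(w - z1) * (w - z2)‖) :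
    ∃ S : ℂ,
      Filter.Tendsto
        (fun N : ℕ => ∑ n ∈ Finset.range N,
          (taylorLaurentD1 g f z1 z2 m n * (z - z1)
            + taylorLaurentD2 g f z1 z2 m n * (z - z2)) *
            ((z - z1) * (z - z2)) ^ n)
        Filter.atTop (nhds S) ∧
      f z = S + ∑ n ∈ Finset.range m,
        taylorLaurentE g z1 z2 m n * (z - z2) ^ n * (z - z1) ^ (-(n : ℤ) - 1) := by
  have hball : {w | (w - z1) * (w - z2) ∈ Metric.ball 0 r} ⊆ Ω := fun w hw ↦
    not_not.1 fun hwΩ ↦ (hrΩ w hwΩ).not_gt (mem_ball_zero_iff.1 hw)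
  have hgz1 : AnalyticAt ℂ g z1 := hg.analyticAt (hΩ.mem_nhds hz1)
  refine ⟨taylorRemainder g z1 m z,
    (hasSum_taylorLaurent h12 hfdef (hg.mono hball) (mem_ball_zero_iff.2 hr)).tendsto_sum_nat, ?_⟩
  rw [hfdef, div_sub_pow_eq_principalPart_add hgz1 hzz1, add_comm,
    principalPart_eq_sum_poleResidue h12 hgz1 hzz1]
  refine congrArg _ (Finset.sum_congr rfl fun n _ ↦ ?_)
  rw [taylorLaurentE_eq h12 hgz1, div_eq_mul_inv, ← neg_add', zpow_neg]
  norm_cast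
end
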